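/- Let σ ∈ Sp(V,a) be semisimple (i.e., V_ℂ is the direct sum of the eigenspaces of σ_ℂ) and suppose σ_ℂ(F) = F for some F ∈ ℍ_V. Then for every eigenvalue λ of σ_ℂ, writing F^λ := F ∩ V_ℂ^λ and p_λ := dim_ℂ F^λ, the eigenspace V_ℂ^λ is the internal direct sum of F^λ and the complex conjugate of F^{λ̄}, and the hermitian form h restricted to V_ℂ^λ is nondegenerate of signature (p_λ, p_{λ̄}). -/

import Mathlib

open TensorProduct Module

noncomputable section

instance : RingHomSurjective (starRingEnd ℂ) :=
  ⟨fun z => ⟨(starRingEnd ℂ) z, by simp⟩⟩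

variable {V : Type*} [AddCommGroup V] [Module ℝ V]

/-- The conjugation of `V_ℂ = ℂ ⊗[ℝ] V` induced by complex conjugation on `ℂ`. -/
def conjC (V : Type*) [AddCommGroup V] [Module ℝ V] :
    (ℂ ⊗[ℝ] V) →ₛₗ[starRingEnd ℂ] (ℂ ⊗[ℝ] V) where
  toFun := TensorProduct.map Complex.conjAe.toLinearMap LinearMap.id
  map_add' x y := map_add _ x y
  map_smul' c x := by
    induction x using TensorProduct.induction_on with
    | zero => simp
    | tmul z v =>
        simp [TensorProduct.smul_tmul', smul_eq_mul, map_mul]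
    | add x y hx hy => simp_all [smul_add]

/-- The hermitian form `h(v,w) = √-1 ⬝ a_ℂ(v, conj w)` associated to a real
symplectic form `a`. -/
def hermSymp (a : LinearMap.BilinForm ℝ V) (v w : ℂ ⊗[ℝ] V) : ℂ :=
  Complex.I * (LinearMap.BilinForm.baseChange ℂ a) v (conjC V w)

/-- Membership in `ℍ_V`: a `g`-dimensional complex subspace of `V_ℂ` that is totally
isotropic for `a_ℂ` and on which `h` is positive definite. -/
def InHV (a : LinearMap.BilinForm ℝ V) (g : ℕ) (F : Submodule ℂ (ℂ ⊗[ℝ] V)) : Prop :=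
  Module.finrank ℂ F = g ∧
  (∀ v ∈ F, ∀ w ∈ F, (LinearMap.BilinForm.baseChange ℂ a) v w = 0) ∧
  (∀ v ∈ F, v ≠ 0 → ∃ r : ℝ, 0 < r ∧ hermSymp a v v = r)

/-!
Over `ℂ`, the condition `F ∈ ℍ_V` forces `V_ℂ = F ⊕ F̄`, an `h`-orthogonal decomposition with `h`
positive definite on `F` and negative definite on `F̄`. A real endomorphism whose complexification
preserves `F` commutes with conjugation, hence preserves `F̄` too, so each of its eigenspaces is the
direct sum of its intersections with `F` and `F̄`. Since conjugation swaps the eigenvalues `λ` and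
`λ̄`, the second intersection is the conjugate of `F^λ̄`.
-/

section Semilinear

variable {R S M N : Type*} [Semiring R] [Semiring S] [AddCommMonoid M] [Module R M]
  [AddCommMonoid N] [Module S N] {τ : R →+* S} {τ' : S →+* R} [RingHomInvPair τ τ']
  [RingHomInvPair τ' τ]

theorem finrank_eq_of_semilinearEquiv (e : M ≃ₛₗ[τ] N) : finrank R M = finrank S N := by
  have hτ : Function.Bijective τ := (RingHomInvPair.toRingEquiv τ τ').bijective
  simpa only [finrank, Cardinal.toNat_lift] using
    congrArg Cardinal.toNat (lift_rank_eq_of_equiv_equiv τ e.toAddEquiv hτ e.map_smulₛₗ)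

end Semilinear

section Eigenspace

variable {R M : Type*} [CommRing R] [AddCommGroup M] [Module R M] {f : End R M}
  {p q : Submodule R M}

theorem inf_eigenspace_sup_inf_eigenspace_of_isCompl (hpq : IsCompl p q)
    (hp : p ∈ f.invtSubmodule) (hq : q ∈ f.invtSubmodule) (μ : R) :
    (p ⊓ f.eigenspace μ) ⊔ (q ⊓ f.eigenspace μ) = f.eigenspace μ := by
  refine le_antisymm (sup_le inf_le_right inf_le_right) fun v hv ↦ ?_
  obtain ⟨x, y, hx, hy, rfl⟩ := Submodule.codisjoint_iff_exists_add_eq.1 hpq.codisjoint v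
  have hxy : f x - μ • x = μ • y - f y := by
    rw [End.mem_eigenspace_iff, map_add, smul_add] at hv
    rw [sub_eq_sub_iff_add_eq_add, hv, add_comm]
  have hxp : f x - μ • x ∈ p := p.sub_mem (hp hx) (p.smul_mem μ hx)
  have hyq : μ • y - f y ∈ q := q.sub_mem (q.smul_mem μ hy) (hq hy)
  have hx0 : f x - μ • x = 0 := Submodule.disjoint_def.1 hpq.disjoint _ hxp (hxy ▸ hyq)
  have hy0 : μ • y - f y = 0 := hxy.symm.trans hx0
  exact Submodule.add_mem_sup ⟨hx, End.mem_eigenspace_iff.2 (sub_eq_zero.1 hx0)⟩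
    ⟨hy, End.mem_eigenspace_iff.2 (sub_eq_zero.1 hy0).symm⟩

end Eigenspace

section Signature

variable {M : Type*} [AddCommGroup M] [Module ℂ M] {B : M →ₗ[ℂ] M →ₗ⋆[ℂ] ℂ}
  {P N W : Submodule ℂ M}

/-- Positive definiteness of a sesquilinear form on a subspace; that the values `B v v` are real is
part of the condition. -/
def IsPosDefOn (B : M →ₗ[ℂ] M →ₗ⋆[ℂ] ℂ) (W : Submodule ℂ M) : Prop :=
  ∀ v ∈ W, v ≠ 0 → ∃ r : ℝ, 0 < r ∧ B v v = r

/-- Negative definiteness of a sesquilinear form on a subspace; that the values `B v v` are real is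
part of the condition. -/
def IsNegDefOn (B : M →ₗ[ℂ] M →ₗ⋆[ℂ] ℂ) (W : Submodule ℂ M) : Prop :=
  ∀ v ∈ W, v ≠ 0 → ∃ r : ℝ, r < 0 ∧ B v v = r

/-- The form `B` restricted to the subspace `W` has signature `(p, q)`. The two summands are
subspaces of the ambient space contained in `W`, rather than submodules of the type `↥W`. -/
def HasSignatureOn (B : M →ₗ[ℂ] M →ₗ⋆[ℂ] ℂ) (W : Submodule ℂ M) (p q : ℕ) : Prop :=
  ∃ P N : Submodule ℂ M, P ≤ W ∧ N ≤ W ∧ P ⊓ N = ⊥ ∧ P ⊔ N = W ∧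
    finrank ℂ P = p ∧ finrank ℂ N = q ∧
    (∀ v ∈ P, ∀ w ∈ N, B v w = 0) ∧ IsPosDefOn B P ∧ IsNegDefOn B N

theorem IsPosDefOn.mono (hW : IsPosDefOn B W) (hPW : P ≤ W) : IsPosDefOn B P :=
  fun v hv ↦ hW v (hPW hv)

theorem IsNegDefOn.mono (hW : IsNegDefOn B W) (hNW : N ≤ W) : IsNegDefOn B N :=
  fun v hv ↦ hW v (hNW hv)

theorem IsPosDefOn.eq_zero_of_apply_self_eq_zero (hW : IsPosDefOn B W) {v : M} (hv : v ∈ W)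
    (h : B v v = 0) : v = 0 := by
  by_contra hv0
  obtain ⟨r, hr, hvr⟩ := hW v hv hv0
  exact hr.ne (Complex.ofReal_eq_zero.1 (hvr.symm.trans h)).symm

theorem IsNegDefOn.eq_zero_of_apply_self_eq_zero (hW : IsNegDefOn B W) {v : M} (hv : v ∈ W)
    (h : B v v = 0) : v = 0 := by
  by_contra hv0
  obtain ⟨r, hr, hvr⟩ := hW v hv hv0
  exact hr.ne (Complex.ofReal_eq_zero.1 (hvr.symm.trans h))

theorem IsPosDefOn.disjoint_of_isNegDefOn (hP : IsPosDefOn B P) (hN : IsNegDefOn B N) :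
    Disjoint P N := by
  refine Submodule.disjoint_def.2 fun v hvP hvN ↦ ?_
  by_contra hv0
  obtain ⟨r, hr, hvr⟩ := hP v hvP hv0
  obtain ⟨s, hs, hvs⟩ := hN v hvN hv0
  exact (hs.trans hr).ne (Complex.ofReal_injective (hvs.symm.trans hvr))

theorem HasSignatureOn.eq_zero_of_forall_apply_eq_zero {p q : ℕ} (hW : HasSignatureOn B W p q)
    (hB : B.IsRefl) {v : M} (hv : v ∈ W) (h : ∀ w ∈ W, B v w = 0) : v = 0 := by
  obtain ⟨P, N, hPW, hNW, -, rfl, -, -, hPN, hP, hN⟩ := hW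
  obtain ⟨x, hx, y, hy, rfl⟩ := Submodule.mem_sup.1 hv
  have hxx : B x x = 0 := by
    simpa only [map_add, LinearMap.add_apply, hB x y (hPN x hx y hy), add_zero] using h x (hPW hx)
  have hyy : B y y = 0 := by
    simpa only [map_add, LinearMap.add_apply, hPN x hx y hy, zero_add] using h y (hNW hy)
  rw [hP.eq_zero_of_apply_self_eq_zero hx hxx, hN.eq_zero_of_apply_self_eq_zero hy hyy, add_zero]

theorem hasSignatureOn_eigenspace {f : End ℂ M} (hPN : IsCompl P N)
    (horth : ∀ v ∈ P, ∀ w ∈ N, B v w = 0) (hP : IsPosDefOn B P) (hN : IsNegDefOn B N)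
    (hfP : P ∈ f.invtSubmodule) (hfN : N ∈ f.invtSubmodule) (μ : ℂ) :
    HasSignatureOn B (f.eigenspace μ) (finrank ℂ ↥(P ⊓ f.eigenspace μ))
      (finrank ℂ ↥(N ⊓ f.eigenspace μ)) :=
  ⟨P ⊓ f.eigenspace μ, N ⊓ f.eigenspace μ, inf_le_right, inf_le_right,
    (hPN.disjoint.mono inf_le_left inf_le_left).eq_bot,
    inf_eigenspace_sup_inf_eigenspace_of_isCompl hPN hfP hfN μ, rfl, rfl,
    fun v hv w hw ↦ horth v hv.1 w hw.1, hP.mono inf_le_left, hN.mono inf_le_left⟩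

end Signature

section Conjugation

theorem conjC_tmul (z : ℂ) (v : V) : conjC V (z ⊗ₜ[ℝ] v) = starRingEnd ℂ z ⊗ₜ[ℝ] v := rfl

theorem conjC_involutive : Function.Involutive (conjC V) := by
  intro x
  induction x using TensorProduct.induction_on with
  | zero => simp only [map_zero]
  | tmul z v => simp only [conjC_tmul, Complex.conj_conj]
  | add x y hx hy => simp only [map_add, hx, hy]

theorem finrank_map_conjC (W : Submodule ℂ (ℂ ⊗[ℝ] V)) :
    finrank ℂ (W.map (conjC V)) = finrank ℂ W :=
  (finrank_eq_of_semilinearEquiv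
    ((LinearEquiv.ofInvolutive (conjC V) conjC_involutive).submoduleMap W)).symm

theorem baseChange_conjC {U : Type*} [AddCommGroup U] [Module ℝ U] (s : V →ₗ[ℝ] U)
    (x : ℂ ⊗[ℝ] V) : s.baseChange ℂ (conjC V x) = conjC U (s.baseChange ℂ x) := by
  induction x using TensorProduct.induction_on with
  | zero => simp only [map_zero]
  | tmul z v => simp only [conjC_tmul, LinearMap.baseChange_tmul]
  | add x y hx hy => simp only [map_add, hx, hy]

theorem map_conjC_mem_invtSubmodule {s : V →ₗ[ℝ] V} {W : Submodule ℂ (ℂ ⊗[ℝ] V)}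
    (hW : W ∈ End.invtSubmodule (s.baseChange ℂ)) :
    W.map (conjC V) ∈ End.invtSubmodule (s.baseChange ℂ) := by
  rintro _ ⟨w, hw, rfl⟩
  exact ⟨s.baseChange ℂ w, hW hw, (baseChange_conjC s w).symm⟩

theorem conjC_mem_eigenspace_baseChange_iff {s : V →ₗ[ℝ] V} {μ : ℂ} {x : ℂ ⊗[ℝ] V} :
    conjC V x ∈ End.eigenspace (s.baseChange ℂ) μ ↔
      x ∈ End.eigenspace (s.baseChange ℂ) (starRingEnd ℂ μ) := by
  rw [End.mem_eigenspace_iff, End.mem_eigenspace_iff, baseChange_conjC,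
    ← conjC_involutive.injective.eq_iff (a := s.baseChange ℂ x), LinearMap.map_smulₛₗ,
    Complex.conj_conj]

theorem map_conjC_inf_eigenspace_baseChange (s : V →ₗ[ℝ] V) (W : Submodule ℂ (ℂ ⊗[ℝ] V)) (μ : ℂ) :
    (W ⊓ End.eigenspace (s.baseChange ℂ) (starRingEnd ℂ μ)).map (conjC V) =
      W.map (conjC V) ⊓ End.eigenspace (s.baseChange ℂ) μ := by
  ext x
  constructor
  · rintro ⟨w, ⟨hwW, hw⟩, rfl⟩
    exact ⟨⟨w, hwW, rfl⟩, conjC_mem_eigenspace_baseChange_iff.2 hw⟩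
  · rintro ⟨⟨w, hwW, rfl⟩, hw⟩
    exact ⟨w, ⟨hwW, conjC_mem_eigenspace_baseChange_iff.1 hw⟩, rfl⟩

end Conjugation

section HermitianForm

theorem bilinForm_baseChange_conjC_conjC (a : LinearMap.BilinForm ℝ V) (x y : ℂ ⊗[ℝ] V) :
    a.baseChange ℂ (conjC V x) (conjC V y) = starRingEnd ℂ (a.baseChange ℂ x y) := by
  induction x using TensorProduct.induction_on with
  | zero => simp only [map_zero, LinearMap.zero_apply]
  | add x₁ x₂ h₁ h₂ => simp only [map_add, LinearMap.add_apply, h₁, h₂]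
  | tmul z v =>
    induction y using TensorProduct.induction_on with
    | zero => simp only [map_zero]
    | add y₁ y₂ h₁ h₂ => simp only [map_add, h₁, h₂]
    | tmul w u => simp [conjC_tmul, LinearMap.BilinForm.baseChange_tmul]

theorem bilinForm_baseChange_neg_of_isAlt {R A M : Type*} [CommRing R] [CommRing A] [Algebra R A]
    [AddCommGroup M] [Module R M] {b : LinearMap.BilinForm R M} (hb : b.IsAlt) (x y : A ⊗[R] M) :
    -b.baseChange A x y = b.baseChange A y x := by
  induction x using TensorProduct.induction_on with
  | zero => simp only [map_zero, LinearMap.zero_apply, neg_zero]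
  | add x₁ x₂ h₁ h₂ => simp only [map_add, LinearMap.add_apply, neg_add, h₁, h₂]
  | tmul z v =>
    induction y using TensorProduct.induction_on with
    | zero => simp only [map_zero, LinearMap.zero_apply, neg_zero]
    | add y₁ y₂ h₁ h₂ => simp only [map_add, LinearMap.add_apply, neg_add, h₁, h₂]
    | tmul w u =>
      simp only [LinearMap.BilinForm.baseChange_tmul, ← hb.neg_eq v u, neg_smul, mul_comm z w]

/-- The form `hermSymp a` bundled as a sesquilinear map, linear in the first variable. -/
def hermSympForm (a : LinearMap.BilinForm ℝ V) : (ℂ ⊗[ℝ] V) →ₗ[ℂ] (ℂ ⊗[ℝ] V) →ₗ⋆[ℂ] ℂ :=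
  Complex.I • (a.baseChange ℂ).compl₂ (conjC V)

variable {a : LinearMap.BilinForm ℝ V}

theorem hermSympForm_apply (v w : ℂ ⊗[ℝ] V) :
    hermSympForm a v w = hermSymp a v w := rfl

theorem conj_hermSympForm (ha : a.IsAlt) (v w : ℂ ⊗[ℝ] V) :
    starRingEnd ℂ (hermSympForm a v w) = hermSympForm a w v := by
  rw [hermSympForm_apply, hermSympForm_apply, hermSymp, hermSymp, map_mul, Complex.conj_I,
    ← bilinForm_baseChange_conjC_conjC, conjC_involutive, neg_mul, ← mul_neg,
    bilinForm_baseChange_neg_of_isAlt ha]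

theorem hermSympForm_isRefl (ha : a.IsAlt) : (hermSympForm a).IsRefl := fun v w h ↦ by
  rw [← conj_hermSympForm ha, h, map_zero]

theorem hermSympForm_conjC_conjC (ha : a.IsAlt) (v w : ℂ ⊗[ℝ] V) :
    hermSympForm a (conjC V v) (conjC V w) = -hermSympForm a w v := by
  rw [hermSympForm_apply, hermSympForm_apply, hermSymp, hermSymp, conjC_involutive,
    ← bilinForm_baseChange_neg_of_isAlt ha, mul_neg]

theorem IsPosDefOn.isNegDefOn_map_conjC (ha : a.IsAlt) {W : Submodule ℂ (ℂ ⊗[ℝ] V)}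
    (hW : IsPosDefOn (hermSympForm a) W) :
    IsNegDefOn (hermSympForm a) (W.map (conjC V)) := by
  rintro _ ⟨w, hw, rfl⟩ hw0
  obtain ⟨r, hr, hwr⟩ := hW w hw fun h ↦ hw0 (by rw [h, map_zero])
  exact ⟨-r, neg_neg_of_pos hr, by rw [hermSympForm_conjC_conjC ha, hwr, Complex.ofReal_neg]⟩

end HermitianForm

section SiegelSpace

variable {a : LinearMap.BilinForm ℝ V} {g : ℕ} {F : Submodule ℂ (ℂ ⊗[ℝ] V)}

theorem InHV.isPosDefOn (hF : InHV a g F) : IsPosDefOn (hermSympForm a) F := hF.2.2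

theorem InHV.hermSympForm_eq_zero (hF : InHV a g F) :
    ∀ v ∈ F, ∀ w ∈ F.map (conjC V), hermSympForm a v w = 0 := by
  rintro v hv _ ⟨w, hw, rfl⟩
  rw [hermSympForm_apply, hermSymp, conjC_involutive, hF.2.1 v hv w hw, mul_zero]

theorem InHV.isCompl_map_conjC [FiniteDimensional ℝ V] (hdim : finrank ℝ V = 2 * g)
    (ha : a.IsAlt) (hF : InHV a g F) : IsCompl F (F.map (conjC V)) := by
  refine (Submodule.isCompl_iff_disjoint _ _ ?_).2
    (hF.isPosDefOn.disjoint_of_isNegDefOn (hF.isPosDefOn.isNegDefOn_map_conjC ha))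
  rw [finrank_baseChange, hdim, finrank_map_conjC, hF.1, two_mul]

theorem eigenspace_decomposition_and_signature_general [FiniteDimensional ℝ V]
    (hdim : finrank ℝ V = 2 * g) (ha : a.IsAlt) (s : V →ₗ[ℝ] V) (hF : InHV a g F)
    (hs : F ∈ End.invtSubmodule (s.baseChange ℂ)) (μ : ℂ) :
    (F ⊓ End.eigenspace (s.baseChange ℂ) μ) ⊓
        (F ⊓ End.eigenspace (s.baseChange ℂ) (starRingEnd ℂ μ)).map (conjC V) = ⊥ ∧
      (F ⊓ End.eigenspace (s.baseChange ℂ) μ) ⊔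
        (F ⊓ End.eigenspace (s.baseChange ℂ) (starRingEnd ℂ μ)).map (conjC V) =
          End.eigenspace (s.baseChange ℂ) μ ∧
      (∀ v ∈ End.eigenspace (s.baseChange ℂ) μ,
        (∀ w ∈ End.eigenspace (s.baseChange ℂ) μ, hermSymp a v w = 0) → v = 0) ∧
      HasSignatureOn (hermSympForm a) (End.eigenspace (s.baseChange ℂ) μ)
        (finrank ℂ ↥(F ⊓ End.eigenspace (s.baseChange ℂ) μ))
        (finrank ℂ ↥(F ⊓ End.eigenspace (s.baseChange ℂ) (starRingEnd ℂ μ))) := by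
  have hcompl : IsCompl F (F.map (conjC V)) := hF.isCompl_map_conjC hdim ha
  have hs' : F.map (conjC V) ∈ End.invtSubmodule (s.baseChange ℂ) := map_conjC_mem_invtSubmodule hs
  have hsig := hasSignatureOn_eigenspace hcompl hF.hermSympForm_eq_zero hF.isPosDefOn
    (hF.isPosDefOn.isNegDefOn_map_conjC ha) hs hs' μ
  simp only [← hermSympForm_apply]
  rw [← finrank_map_conjC (F ⊓ End.eigenspace _ (starRingEnd ℂ μ)),
    map_conjC_inf_eigenspace_baseChange]
  exact ⟨(hcompl.disjoint.mono inf_le_left inf_le_left).eq_bot,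
    inf_eigenspace_sup_inf_eigenspace_of_isCompl hcompl hs hs' μ,
    fun v hv ↦ hsig.eq_zero_of_forall_apply_eq_zero (hermSympForm_isRefl ha) hv, hsig⟩

end SiegelSpace

/-- let `σ ∈ Sp(V,a)` be semisimple with `σ_ℂ(F) = F` for some `F ∈ ℍ_V`.
Then for every eigenvalue `λ` of `σ_ℂ`, with `F^λ = F ∩ V_ℂ^λ` and `p_λ = dim F^λ`, the
eigenspace `V_ℂ^λ` is the internal direct sum of `F^λ` and the conjugate of `F^{λ̄}`, and
`h` restricted to `V_ℂ^λ` is nondegenerate of signature `(p_λ, p_{λ̄})`. -/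
theorem eigenspace_decomposition_and_signature
    [FiniteDimensional ℝ V] (g : ℕ) (hg : 1 ≤ g)
    (hdim : Module.finrank ℝ V = 2 * g)
    (a : LinearMap.BilinForm ℝ V)
    (halt : LinearMap.IsAlt a) (hnd : LinearMap.BilinForm.Nondegenerate a)
    (σ : V ≃ₗ[ℝ] V) (hσ : ∀ v w : V, a (σ v) (σ w) = a v w)
    (hss : ⨆ μ : ℂ,
      Module.End.eigenspace (LinearMap.baseChange ℂ (σ : V →ₗ[ℝ] V)) μ = ⊤)
    (F : Submodule ℂ (ℂ ⊗[ℝ] V)) (hF : InHV a g F)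
    (hstab : Submodule.map (LinearMap.baseChange ℂ (σ : V →ₗ[ℝ] V)) F = F) :
    ∀ lam : ℂ,
      Module.End.HasEigenvalue (LinearMap.baseChange ℂ (σ : V →ₗ[ℝ] V)) lam →
      (F ⊓ Module.End.eigenspace (LinearMap.baseChange ℂ (σ : V →ₗ[ℝ] V)) lam) ⊓
        Submodule.map (conjC V)
          (F ⊓ Module.End.eigenspace (LinearMap.baseChange ℂ (σ : V →ₗ[ℝ] V))
            (starRingEnd ℂ lam)) = ⊥ ∧
      (F ⊓ Module.End.eigenspace (LinearMap.baseChange ℂ (σ : V →ₗ[ℝ] V)) lam) ⊔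
        Submodule.map (conjC V)
          (F ⊓ Module.End.eigenspace (LinearMap.baseChange ℂ (σ : V →ₗ[ℝ] V))
            (starRingEnd ℂ lam)) =
        Module.End.eigenspace (LinearMap.baseChange ℂ (σ : V →ₗ[ℝ] V)) lam ∧
      (∀ v ∈ Module.End.eigenspace (LinearMap.baseChange ℂ (σ : V →ₗ[ℝ] V)) lam,
        (∀ w ∈ Module.End.eigenspace (LinearMap.baseChange ℂ (σ : V →ₗ[ℝ] V)) lam,
          hermSymp a v w = 0) → v = 0) ∧
      (∃ P N : Submodule ℂ (ℂ ⊗[ℝ] V),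
        P ≤ Module.End.eigenspace (LinearMap.baseChange ℂ (σ : V →ₗ[ℝ] V)) lam ∧
        N ≤ Module.End.eigenspace (LinearMap.baseChange ℂ (σ : V →ₗ[ℝ] V)) lam ∧
        P ⊓ N = ⊥ ∧
        P ⊔ N = Module.End.eigenspace (LinearMap.baseChange ℂ (σ : V →ₗ[ℝ] V)) lam ∧
        Module.finrank ℂ P = Module.finrank ℂ
          ↥(F ⊓ Module.End.eigenspace (LinearMap.baseChange ℂ (σ : V →ₗ[ℝ] V)) lam) ∧
        Module.finrank ℂ N = Module.finrank ℂ
          ↥(F ⊓ Module.End.eigenspace (LinearMap.baseChange ℂ (σ : V →ₗ[ℝ] V))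
            (starRingEnd ℂ lam)) ∧
        (∀ v ∈ P, ∀ w ∈ N, hermSymp a v w = 0) ∧
        (∀ v ∈ P, v ≠ 0 → ∃ r : ℝ, 0 < r ∧ hermSymp a v v = r) ∧
        (∀ w ∈ N, w ≠ 0 → ∃ r : ℝ, r < 0 ∧ hermSymp a w w = r)) := fun lam _ ↦
  eigenspace_decomposition_and_signature_general hdim halt σ hF
    ((End.mem_invtSubmodule_iff_map_le _).2 hstab.le) lam

end
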